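/- arXiv:1202.2555 — 3 statements merged into one kernel-verified Lean document; each statement's English description precedes it below -/
import Mathlib

section
/- Let γ : ℝ → ℂ be a smooth curve parametrized by arclength that satisfies the Abresch–Langer self-shrinker equation γ''(t) = ⟨γ'(t), i·γ(t)⟩ · i·γ'(t), and suppose γ(t) ≠ 0 for all t. Set r(t) = |γ(t)| (which is differentiable with r'(t) = ⟨γ(t), γ'(t)⟩ / r(t)). Then the function t ↦ r(t)²·(1 − r'(t)²)·e^{−r(t)²} is constant on ℝ, equal to ρ² where ρ = ⟨γ'(0), i·γ(0)⟩ · e^{−|γ(0)|²/2}. -/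
/-- Real inner product on ℂ ≅ ℝ²: ⟨u,v⟩ = Re(u · conj v). -/
noncomputable def rinner (u v : ℂ) : ℝ := u.re * v.re + u.im * v.im

/-!
Write `w = ⟨γ', iγ⟩`. As `i` is a skew isometry, the equation gives `w' = w ⟨γ, γ'⟩`, and
`⟨γ, γ'⟩` is the derivative of `|γ|² / 2`; hence `w * exp (-|γ|² / 2)` is constant. In the plane
`γ` and `iγ` form an orthogonal frame, so `w² = |γ|² |γ'|² - ⟨γ, γ'⟩² = r² (|γ'|² - r'²)`, and
squaring the constant gives the first integral.
-/

open Complex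
open scoped InnerProductSpace

theorem exp_neg_smul_eq_of_hasDerivAt {F : Type*} [NormedAddCommGroup F] [NormedSpace ℝ F]
    {φ φ' : ℝ → ℝ} {w : ℝ → F} (hφ : ∀ t, HasDerivAt φ (φ' t) t)
    (hw : ∀ t, HasDerivAt w (φ' t • w t) t) (s t : ℝ) :
    Real.exp (-φ s) • w s = Real.exp (-φ t) • w t := by
  have hderiv (u : ℝ) : HasDerivAt (fun x => Real.exp (-φ x) • w x) 0 u :=
    ((hφ u).fun_neg.exp.fun_smul (hw u)).congr_deriv (by module)
  exact is_const_of_deriv_eq_zero (fun u => (hderiv u).differentiableAt)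
    (fun u => (hderiv u).deriv) s t

section InnerProductSpace

variable {E : Type*} [NormedAddCommGroup E] [InnerProductSpace ℝ E]

theorem hasDerivAt_norm_of_ne_zero {f : ℝ → E} {f' : E} {t : ℝ} (hf : HasDerivAt f f' t)
    (hne : f t ≠ 0) : HasDerivAt (fun u => ‖f u‖) (⟪f t, f'⟫_ℝ / ‖f t‖) t := by
  have hsq : ‖f t‖ ^ 2 ≠ 0 := pow_ne_zero 2 (norm_ne_zero_iff.mpr hne)
  simpa [Real.sqrt_sq, mul_div_mul_left] using hf.norm_sq.sqrt hsq

variable {J : E →ₗᵢ[ℝ] E} {γ v : ℝ → E}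

theorem hasDerivAt_inner_skew_of_self_shrinker (hJ : ∀ x, ⟪x, J x⟫_ℝ = 0) {t : ℝ}
    (hγ : HasDerivAt γ (v t) t) (hv : HasDerivAt v (⟪v t, J (γ t)⟫_ℝ • J (v t)) t) :
    HasDerivAt (fun u => ⟪v u, J (γ u)⟫_ℝ) (⟪γ t, v t⟫_ℝ * ⟪v t, J (γ t)⟫_ℝ) t := by
  have hJγ : HasDerivAt (fun u => J (γ u)) (J (v t)) t :=
    J.toContinuousLinearMap.hasFDerivAt.comp_hasDerivAt t hγ
  refine (hv.inner ℝ hJγ).congr_deriv ?_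
  rw [hJ, real_inner_smul_left, J.inner_map_map, real_inner_comm (v t) (γ t)]
  ring

theorem exp_mul_inner_skew_eq_of_self_shrinker (hJ : ∀ x, ⟪x, J x⟫_ℝ = 0)
    (hγ : ∀ t, HasDerivAt γ (v t) t)
    (hv : ∀ t, HasDerivAt v (⟪v t, J (γ t)⟫_ℝ • J (v t)) t) (s t : ℝ) :
    Real.exp (-(‖γ s‖ ^ 2 / 2)) * ⟪v s, J (γ s)⟫_ℝ =
      Real.exp (-(‖γ t‖ ^ 2 / 2)) * ⟪v t, J (γ t)⟫_ℝ := by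
  have hφ (u : ℝ) : HasDerivAt (fun x => ‖γ x‖ ^ 2 / 2) ⟪γ u, v u⟫_ℝ u :=
    ((hγ u).norm_sq.div_const 2).congr_deriv (by ring)
  exact exp_neg_smul_eq_of_hasDerivAt hφ
    (fun u => hasDerivAt_inner_skew_of_self_shrinker hJ (hγ u) (hv u)) s t

end InnerProductSpace

attribute [local instance] Complex.finrank_real_complex_fact

theorem rinner_eq_inner (u v : ℂ) : rinner u v = ⟪u, v⟫_ℝ := by
  simp [rinner, Complex.inner, mul_comm]

theorem rinner_sq_add_rinner_I_mul_sq (u v : ℂ) :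
    rinner u v ^ 2 + rinner v (I * u) ^ 2 = ‖u‖ ^ 2 * ‖v‖ ^ 2 := by
  rw [rinner_eq_inner, rinner_eq_inner, ← Complex.rightAngleRotation, real_inner_comm,
    Complex.orientation.inner_rightAngleRotation_right, neg_sq,
    Complex.orientation.inner_sq_add_areaForm_sq, mul_comm]

theorem norm_sq_mul_norm_sq_sub_deriv_norm_sq {f : ℝ → ℂ} {f' : ℂ} {t : ℝ}
    (hf : HasDerivAt f f' t) (hne : f t ≠ 0) :
    ‖f t‖ ^ 2 * (‖f'‖ ^ 2 - deriv (fun u => ‖f u‖) t ^ 2) = rinner f' (I * f t) ^ 2 := by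
  have hnorm : ‖f t‖ ≠ 0 := norm_ne_zero_iff.mpr hne
  have hradial : ‖f t‖ * deriv (fun u => ‖f u‖) t = rinner (f t) f' := by
    rw [(hasDerivAt_norm_of_ne_zero hf hne).deriv, rinner_eq_inner, mul_div_cancel₀ _ hnorm]
  rw [mul_sub, ← mul_pow _ (deriv _ t), hradial, ← rinner_sq_add_rinner_I_mul_sq,
    add_sub_cancel_left]

theorem rinner_mul_exp_eq_of_self_shrinker {γ v : ℝ → ℂ} (hγ : ∀ t, HasDerivAt γ (v t) t)
    (hv : ∀ t, HasDerivAt v (rinner (v t) (I * γ t) • (I * v t)) t) (s t : ℝ) :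
    rinner (v s) (I * γ s) * Real.exp (-‖γ s‖ ^ 2 / 2) =
      rinner (v t) (I * γ t) * Real.exp (-‖γ t‖ ^ 2 / 2) := by
  simp only [rinner_eq_inner, ← Complex.rightAngleRotation, neg_div,
    mul_comm _ (Real.exp _)] at hv ⊢
  exact exp_mul_inner_skew_eq_of_self_shrinker
    (J := Complex.orientation.rightAngleRotation.toLinearIsometry)
    (fun z => (real_inner_comm _ _).trans (Complex.orientation.inner_rightAngleRotation_self z))
    hγ hv s t

theorem abresch_langer_first_integral_general {γ v : ℝ → ℂ}
    (hγ : ∀ t, HasDerivAt γ (v t) t)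
    (hv : ∀ t, HasDerivAt v (rinner (v t) (I * γ t) • (I * v t)) t)
    (s t : ℝ) (hne : γ t ≠ 0) :
    HasDerivAt (fun u => ‖γ u‖) (rinner (γ t) (v t) / ‖γ t‖) t ∧
      ‖γ t‖ ^ 2 * (‖v t‖ ^ 2 - deriv (fun u => ‖γ u‖) t ^ 2) * Real.exp (-‖γ t‖ ^ 2) =
        (rinner (v s) (I * γ s) * Real.exp (-‖γ s‖ ^ 2 / 2)) ^ 2 := by
  refine ⟨rinner_eq_inner (γ t) (v t) ▸ hasDerivAt_norm_of_ne_zero (hγ t) hne, ?_⟩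
  have hexp : Real.exp (-‖γ t‖ ^ 2) = Real.exp (-‖γ t‖ ^ 2 / 2) ^ 2 := by
    rw [← Real.exp_nat_mul, Nat.cast_ofNat, mul_div_cancel₀ _ two_ne_zero]
  rw [norm_sq_mul_norm_sq_sub_deriv_norm_sq (hγ t) hne, hexp, ← mul_pow,
    rinner_mul_exp_eq_of_self_shrinker hγ hv s t]

/-- For a nonvanishing smooth arclength-parametrized curve satisfying the
Abresch–Langer self-shrinker equation γ'' = ⟨γ', iγ⟩ iγ', the radius r = |γ| is
differentiable with r' = ⟨γ,γ'⟩/r, and r²(1 - r'²)e^{-r²} is constant, equal to ρ²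
where ρ = ⟨γ'(0), iγ(0)⟩ e^{-|γ(0)|²/2}. -/
theorem abresch_langer_first_integral (γ : ℝ → ℂ) (hsmooth : ContDiff ℝ (⊤ : ℕ∞) γ)
    (harc : ∀ t, ‖deriv γ t‖ = 1) (hne : ∀ t, γ t ≠ 0)
    (hAL : ∀ t, deriv (deriv γ) t =
      (rinner (deriv γ t) (Complex.I * γ t)) • (Complex.I * deriv γ t)) :
    (∀ t, HasDerivAt (fun u => ‖γ u‖) (rinner (γ t) (deriv γ t) / ‖γ t‖) t) ∧
    (∀ t, ‖γ t‖ ^ 2 * (1 - (deriv (fun u => ‖γ u‖) t) ^ 2) * Real.exp (-‖γ t‖ ^ 2)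
        = (rinner (deriv γ 0) (Complex.I * γ 0) * Real.exp (-‖γ 0‖ ^ 2 / 2)) ^ 2) := by
  have hγ : ∀ t, HasDerivAt γ (deriv γ t) t := fun t =>
    (hsmooth.differentiable (by simp) t).hasDerivAt
  have hv : ∀ t, HasDerivAt (deriv γ) (rinner (deriv γ t) (I * γ t) • (I * deriv γ t)) t :=
    fun t => hAL t ▸ ((contDiff_infty_iff_deriv.mp hsmooth).2.differentiable (by simp) t).hasDerivAt
  have hmain := fun t => abresch_langer_first_integral_general hγ hv 0 t (hne t)
  simp only [harc, one_pow] at hmain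
  exact forall_and.mp hmain
end

section
/- Let γ : ℝ → ℂ be a smooth curve parametrized by arclength with γ(t) ≠ 0 for all t, satisfying the Anciaux equation γ''(t) = ⟨γ'(t), i·γ(t)⟩·((|γ(t)|² − 1)/|γ(t)|²) · i·γ'(t). Then the Anciaux immersion φ(t,s) = γ(t)·(cos s, sin s) satisfies the parametric self-shrinker equation H = −φ^⊥: for all (t,s), ∂_t²φ + (⟨γ(t), γ'(t)⟩/|γ(t)|²)·∂_tφ + (1/|γ(t)|²)·∂_s²φ = −φ + ⟨φ, ∂_tφ⟩·∂_tφ. Here the left-hand side is the mean curvature vector H of φ (the Laplace–Beltrami operator of the induced metric dt² + |γ(t)|²ds² applied to φ), ∂_tφ and ∂_sφ are orthogonal with ‖∂_tφ‖ = 1, ‖∂_sφ‖ = |γ(t)|, and the right-hand side is minus the projection of the position vector φ onto the normal space. -/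
/-- Real inner product on ℂ² ≅ ℝ⁴. -/
noncomputable def rinner2 (u v : ℂ × ℂ) : ℝ := rinner u.1 v.1 + rinner u.2 v.2

/-- Partial derivative of F : ℝ² → ℂ² in the first variable. -/
noncomputable def pd1 (F : ℝ → ℝ → ℂ × ℂ) (a b : ℝ) : ℂ × ℂ := deriv (fun x => F x b) a

/-- Partial derivative of F : ℝ² → ℂ² in the second variable. -/
noncomputable def pd2 (F : ℝ → ℝ → ℂ × ℂ) (a b : ℝ) : ℂ × ℂ := deriv (fun y => F a y) b

/-- The Anciaux immersion φ(t,s) = γ(t)(cos s, sin s). -/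
noncomputable def anciauxMap (γ : ℝ → ℂ) (t s : ℝ) : ℂ × ℂ :=
  (γ t * Real.cos s, γ t * Real.sin s)

/-!
Since `∂ₛ` acts on `φ` as the shift `s ↦ s + π/2`, every scalar product of derivatives of `φ` is
`cos (s - s')` times a planar one, and `∂ₛ²φ = -φ`. The self-shrinker equation thus reduces to an
identity between `γ`, `T = γ'` and `γ''` in the plane. Decomposing `γ` in the orthonormal frame
`(T, iT)` gives `γ - ⟨γ, T⟩T = -⟨T, iγ⟩iT`, so the Anciaux equation says that
`γ'' = -(1 - 1/|γ|²)(γ - ⟨γ, T⟩T)`. The part with factor `1/|γ|²` cancels against the terms of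
`H` coming from `∂ₜφ` and `∂ₛ²φ`, and the part with factor `1` is `-φ^⊥`.
-/

theorem rinner_self (z : ℂ) : rinner z z = ‖z‖ ^ 2 := by
  rw [← Complex.normSq_eq_norm_sq, Complex.normSq_apply, rinner]

theorem rinner_smul_sub_rinner_I_mul_smul (g T : ℂ) :
    rinner g T • T - rinner T (Complex.I * g) • (Complex.I * T) = ‖T‖ ^ 2 • g := by
  rw [← rinner_self]
  apply Complex.ext <;> simp [rinner] <;> ring

theorem anciaux_curvature_identity {g T : ℂ} {r : ℝ} (hT : ‖T‖ = 1) (hr : r ≠ 0) :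
    (rinner T (Complex.I * g) * ((r - 1) / r)) • (Complex.I * T)
        + (rinner g T / r) • T - (1 / r) • g
      = -g + rinner g T • T := by
  have frame : g = rinner g T • T - rinner T (Complex.I * g) • (Complex.I * T) := by
    rw [rinner_smul_sub_rinner_I_mul_smul, hT, one_pow, one_smul]
  generalize rinner g T = p, rinner T (Complex.I * g) = c at frame ⊢
  subst frame
  match_scalars <;> field_simp <;> ring

theorem rinner2_anciauxMap (α β : ℝ → ℂ) (t t' s s' : ℝ) :
    rinner2 (anciauxMap α t s) (anciauxMap β t' s') = Real.cos (s - s') * rinner (α t) (β t') := by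
  simp only [rinner2, rinner, anciauxMap, Complex.re_mul_ofReal, Complex.im_mul_ofReal,
    Real.cos_sub]
  ring

theorem pd1_anciauxMap {γ : ℝ → ℂ} {t : ℝ} (hγ : DifferentiableAt ℝ γ t) (s : ℝ) :
    pd1 (anciauxMap γ) t s = anciauxMap (deriv γ) t s :=
  ((hγ.hasDerivAt.mul_const _).prodMk (hγ.hasDerivAt.mul_const _)).deriv

theorem pd1_pd1_anciauxMap {γ : ℝ → ℂ} {t : ℝ} (hγ : ∀ᶠ x in nhds t, DifferentiableAt ℝ γ x)
    (hγ' : DifferentiableAt ℝ (deriv γ) t) (s : ℝ) :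
    pd1 (pd1 (anciauxMap γ)) t s = anciauxMap (deriv (deriv γ)) t s := by
  have pd1_eventuallyEq :
      (fun x => pd1 (anciauxMap γ) x s) =ᶠ[nhds t] fun x => anciauxMap (deriv γ) x s :=
    hγ.mono fun _ hx => pd1_anciauxMap hx s
  exact pd1_eventuallyEq.deriv_eq.trans (pd1_anciauxMap hγ' s)

theorem pd2_anciauxMap (γ : ℝ → ℂ) (t s : ℝ) :
    pd2 (anciauxMap γ) t s = anciauxMap γ t (s + Real.pi / 2) := by
  rw [anciauxMap, Real.cos_add_pi_div_two, Real.sin_add_pi_div_two]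
  exact (((Real.hasDerivAt_cos s).ofReal_comp.const_mul (γ t)).prodMk
    ((Real.hasDerivAt_sin s).ofReal_comp.const_mul (γ t))).deriv

theorem pd2_pd2_anciauxMap (γ : ℝ → ℂ) (t s : ℝ) :
    pd2 (pd2 (anciauxMap γ)) t s = -anciauxMap γ t s := by
  calc pd2 (pd2 (anciauxMap γ)) t s
      = deriv (fun y => anciauxMap γ t (y + Real.pi / 2)) s := by
        simp only [pd2, ← pd2_anciauxMap]
    _ = pd2 (anciauxMap γ) t (s + Real.pi / 2) := deriv_comp_add_const _ _ _
    _ = anciauxMap γ t (s + Real.pi) := by rw [pd2_anciauxMap, add_assoc, add_halves]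
    _ = -anciauxMap γ t s := by simp [anciauxMap]

/-- The pointwise form also covers solutions on an interval that have no nonvanishing extension
to `ℝ`, such as a ray issuing from the origin. -/
theorem anciaux_self_shrinker_general {γ : ℝ → ℂ} {t : ℝ}
    (hγ : ∀ᶠ x in nhds t, DifferentiableAt ℝ γ x) (hγ' : DifferentiableAt ℝ (deriv γ) t)
    (harc : ‖deriv γ t‖ = 1) (hne : γ t ≠ 0)
    (hAnc : deriv (deriv γ) t =
      (rinner (deriv γ t) (Complex.I * γ t) * ((‖γ t‖ ^ 2 - 1) / ‖γ t‖ ^ 2))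
        • (Complex.I * deriv γ t)) (s : ℝ) :
    rinner2 (pd1 (anciauxMap γ) t s) (pd2 (anciauxMap γ) t s) = 0 ∧
    rinner2 (pd1 (anciauxMap γ) t s) (pd1 (anciauxMap γ) t s) = 1 ∧
    rinner2 (pd2 (anciauxMap γ) t s) (pd2 (anciauxMap γ) t s) = ‖γ t‖ ^ 2 ∧
    pd1 (pd1 (anciauxMap γ)) t s
        + (rinner (γ t) (deriv γ t) / ‖γ t‖ ^ 2) • pd1 (anciauxMap γ) t s
        + (1 / ‖γ t‖ ^ 2) • pd2 (pd2 (anciauxMap γ)) t s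
      = -anciauxMap γ t s
        + (rinner2 (anciauxMap γ t s) (pd1 (anciauxMap γ) t s))
            • pd1 (anciauxMap γ) t s := by
  rw [pd1_pd1_anciauxMap hγ hγ', pd1_anciauxMap hγ.self_of_nhds, pd2_anciauxMap,
    pd2_pd2_anciauxMap]
  simp only [rinner2_anciauxMap, sub_self, Real.cos_zero, one_mul]
  refine ⟨by simp, by rw [rinner_self, harc, one_pow], rinner_self _, ?_⟩
  have planar := anciaux_curvature_identity (g := γ t) harc (pow_ne_zero 2 (norm_ne_zero_iff.2 hne))
  rw [← hAnc] at planar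
  simp only [Complex.real_smul] at planar
  ext1 <;> simp only [anciauxMap, Prod.fst_add, Prod.snd_add, Prod.smul_fst, Prod.smul_snd,
    Prod.fst_neg, Prod.snd_neg, Complex.real_smul]
  · linear_combination (Real.cos s : ℂ) * planar
  · linear_combination (Real.sin s : ℂ) * planar

/-- If γ is an arclength-parametrized nonvanishing solution of the Anciaux
equation, then φ(t,s) = γ(t)(cos s, sin s) satisfies H = -φ^⊥: the coordinate
vectors ∂ₜφ, ∂ₛφ are orthogonal with ‖∂ₜφ‖ = 1, ‖∂ₛφ‖ = |γ|, and the mean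
curvature vector ∂ₜ²φ + (⟨γ,γ'⟩/|γ|²)∂ₜφ + (1/|γ|²)∂ₛ²φ equals
-φ + ⟨φ, ∂ₜφ⟩∂ₜφ, minus the normal projection of the position vector. -/
theorem anciaux_self_shrinker (γ : ℝ → ℂ) (hsmooth : ContDiff ℝ (⊤ : ℕ∞) γ)
    (harc : ∀ t, ‖deriv γ t‖ = 1) (hne : ∀ t, γ t ≠ 0)
    (hAnc : ∀ t, deriv (deriv γ) t =
      (rinner (deriv γ t) (Complex.I * γ t) * ((‖γ t‖ ^ 2 - 1) / ‖γ t‖ ^ 2))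
        • (Complex.I * deriv γ t)) :
    ∀ t s : ℝ,
      rinner2 (pd1 (anciauxMap γ) t s) (pd2 (anciauxMap γ) t s) = 0 ∧
      rinner2 (pd1 (anciauxMap γ) t s) (pd1 (anciauxMap γ) t s) = 1 ∧
      rinner2 (pd2 (anciauxMap γ) t s) (pd2 (anciauxMap γ) t s) = ‖γ t‖ ^ 2 ∧
      pd1 (pd1 (anciauxMap γ)) t s
          + (rinner (γ t) (deriv γ t) / ‖γ t‖ ^ 2) • pd1 (anciauxMap γ) t s
          + (1 / ‖γ t‖ ^ 2) • pd2 (pd2 (anciauxMap γ)) t s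
        = -anciauxMap γ t s
          + (rinner2 (anciauxMap γ t s) (pd1 (anciauxMap γ) t s))
              • pd1 (anciauxMap γ) t s := by
  have hC2 : ContDiff ℝ 2 γ := contDiff_infty.1 hsmooth 2
  exact fun t => anciaux_self_shrinker_general (.of_forall (hC2.differentiable two_ne_zero))
    (hC2.differentiable_deriv_two t) (harc t) (hne t) (hAnc t)
end

section
/- Let m ≤ n be positive integers and let Ψ = Ψ_{m,n} : ℝ² → ℂ² be the Lee–Wang map, and set λ(s) = ‖∂_sΨ‖² = ((m+n)/(mn))·(m·sin²s + n·cos²s). Then Ψ satisfies the parametric self-shrinker equation: for all (s,t), ∂_s²Ψ + ∂_t²Ψ = −λ(s)·Ψ + ⟨Ψ, ∂_sΨ⟩·∂_sΨ. Since Ψ is a conformal parametrization with conformal factor λ, the left-hand side equals λ·H where H is the mean curvature vector, and the right-hand side equals −λ·Ψ^⊥ where Ψ^⊥ is the projection of the position vector onto the normal space; hence H = −Ψ^⊥, i.e. the Lee–Wang tori are self-shrinkers. -/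
/-- Squared Euclidean norm on ℂ² ≅ ℝ⁴. -/
noncomputable def norm2 (v : ℂ × ℂ) : ℝ := ‖v.1‖ ^ 2 + ‖v.2‖ ^ 2

/-- The Lee–Wang map Ψ_{m,n}(s,t) = √(m+n)((1/√n)cos s e^{i√(n/m)t}, (1/√m)sin s e^{i√(m/n)t}). -/
noncomputable def leeWang (m n : ℕ) (s t : ℝ) : ℂ × ℂ :=
  ((Real.sqrt (m + n) * (1 / Real.sqrt n) * Real.cos s : ℝ)
      * Complex.exp (Complex.I * (Real.sqrt ((n : ℝ) / m) * t)),
   (Real.sqrt (m + n) * (1 / Real.sqrt m) * Real.sin s : ℝ)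
      * Complex.exp (Complex.I * (Real.sqrt ((m : ℝ) / n) * t)))

/-!
The surface is swept out by the ellipse `γ(s) = (A cos s, B sin s)` under the one-parameter group of
isometries `(z, w) ↦ (e^{iat} z, e^{ibt} w)`, and the self-shrinker equation is invariant under
isometries. It therefore reduces to an ordinary differential equation for the profile curve `γ`,
which holds as soon as `A² = 1 + b²` and `B² = 1 + a²`. For the Lee–Wang map these relations read
`(m + n) / n = 1 + m / n` and `(m + n) / m = 1 + n / m`.
-/

/-- The parametric self-shrinker equation `∂ₛ²Ψ + ∂ₜ²Ψ = -‖∂ₛΨ‖²Ψ + ⟨Ψ, ∂ₛΨ⟩∂ₛΨ`. It expresses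
`H = -Ψ^⊥` when `Ψ` is a conformal immersion with `⟨Ψ, ∂ₜΨ⟩ = 0`; neither of these two conditions is
part of the definition. -/
def SelfShrinkerEquation (Ψ : ℝ → ℝ → ℂ × ℂ) : Prop :=
  ∀ s t : ℝ, pd1 (pd1 Ψ) s t + pd2 (pd2 Ψ) s t =
    -norm2 (pd1 Ψ s t) • Ψ s t + rinner2 (Ψ s t) (pd1 Ψ s t) • pd1 Ψ s t

/-- The one-parameter group `t ↦ (e^{iat}, e^{ibt})` in the torus `U(1) × U(1)`. It acts on `ℂ²` by
multiplication in the product ring `ℂ × ℂ`. -/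
noncomputable def phase (a b t : ℝ) : ℂ × ℂ :=
  (Complex.exp (Complex.I * (a * t)), Complex.exp (Complex.I * (b * t)))

/-- The ellipse with semi-axes `A` and `B` in the real plane `ℝ² ⊆ ℂ²`, the profile curve of the
Lee–Wang surfaces. -/
noncomputable def ellipse (A B s : ℝ) : ℂ × ℂ :=
  ((A * Real.cos s : ℝ), (B * Real.sin s : ℝ))

/-- The velocity of `ellipse A B` at the parameter `s`. -/
noncomputable def ellipseVelocity (A B s : ℝ) : ℂ × ℂ :=
  ((-(A * Real.sin s) : ℝ), (B * Real.cos s : ℝ))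

/-- The Lee–Wang map with real parameters in place of the integers `m` and `n`, written as a rotated
ellipse. -/
noncomputable def realLeeWang (p q s t : ℝ) : ℂ × ℂ :=
  ellipse (√(p + q) * (1 / √q)) (√(p + q) * (1 / √p)) s * phase (√(q / p)) (√(p / q)) t

theorem pd1_mul {γ γ' : ℝ → ℂ × ℂ} (hγ : ∀ s, HasDerivAt γ (γ' s) s) (e : ℝ → ℂ × ℂ) :
    pd1 (fun s t => γ s * e t) = fun s t => γ' s * e t := by
  funext s t
  exact ((hγ s).mul_const (e t)).deriv

theorem pd2_mul {e e' : ℝ → ℂ × ℂ} (he : ∀ t, HasDerivAt e (e' t) t) (γ : ℝ → ℂ × ℂ) :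
    pd2 (fun s t => γ s * e t) = fun s t => γ s * e' t := by
  funext s t
  exact ((he t).const_mul (γ s)).deriv

theorem rinner_mul_mul_right (u v e : ℂ) : rinner (u * e) (v * e) = ‖e‖ ^ 2 * rinner u v := by
  simp only [rinner, Complex.mul_re, Complex.mul_im, Complex.sq_norm, Complex.normSq_apply]
  ring

theorem norm_exp_I_mul_ofReal_mul (a t : ℝ) : ‖Complex.exp (Complex.I * (a * t))‖ = 1 := by
  rw [← Complex.ofReal_mul, Complex.norm_exp_I_mul_ofReal]

theorem rinner2_mul_phase (z w : ℂ × ℂ) (a b t : ℝ) :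
    rinner2 (z * phase a b t) (w * phase a b t) = rinner2 z w := by
  simp only [rinner2, phase, Prod.fst_mul, Prod.snd_mul, rinner_mul_mul_right,
    norm_exp_I_mul_ofReal_mul, one_pow, one_mul]

theorem norm2_mul_phase (z : ℂ × ℂ) (a b t : ℝ) : norm2 (z * phase a b t) = norm2 z := by
  simp only [norm2, phase, Prod.fst_mul, Prod.snd_mul, norm_mul, norm_exp_I_mul_ofReal_mul, mul_one]

theorem hasDerivAt_exp_I_mul (a t : ℝ) :
    HasDerivAt (fun y : ℝ => Complex.exp (Complex.I * (a * y)))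
      (Complex.I * a * Complex.exp (Complex.I * (a * t))) t := by
  have hlin : HasDerivAt (fun y : ℝ => Complex.I * (a * y)) (Complex.I * a) t := by
    simpa using (((hasDerivAt_id t).ofReal_comp).const_mul (a : ℂ)).const_mul Complex.I
  simpa only [mul_comm] using hlin.cexp

theorem hasDerivAt_phase (a b t : ℝ) :
    HasDerivAt (phase a b) ((Complex.I * a, Complex.I * b) * phase a b t) t :=
  (hasDerivAt_exp_I_mul a t).prodMk (hasDerivAt_exp_I_mul b t)

theorem pd2_pd2_mul_phase (γ : ℝ → ℂ × ℂ) (a b : ℝ) :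
    pd2 (pd2 fun s t => γ s * phase a b t) =
      fun s t => -(((a : ℂ) ^ 2, (b : ℂ) ^ 2) * γ s * phase a b t) := by
  have generator_sq : (Complex.I * a, Complex.I * b) * (Complex.I * a, Complex.I * b) =
      -((a : ℂ) ^ 2, (b : ℂ) ^ 2) := by
    ext1 <;> simp [mul_mul_mul_comm, sq]
  rw [pd2_mul (hasDerivAt_phase a b), pd2_mul fun t => (hasDerivAt_phase a b t).const_mul _]
  funext s t
  linear_combination γ s * phase a b t * generator_sq

theorem selfShrinkerEquation_mul_phase {γ γ' γ'' : ℝ → ℂ × ℂ} {a b : ℝ}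
    (hγ : ∀ s, HasDerivAt γ (γ' s) s) (hγ' : ∀ s, HasDerivAt γ' (γ'' s) s)
    (hprofile : ∀ s, γ'' s - ((a : ℂ) ^ 2, (b : ℂ) ^ 2) * γ s =
      -norm2 (γ' s) • γ s + rinner2 (γ s) (γ' s) • γ' s) :
    SelfShrinkerEquation fun s t => γ s * phase a b t := by
  intro s t
  rw [pd1_mul hγ, pd1_mul hγ', pd2_pd2_mul_phase, norm2_mul_phase, rinner2_mul_phase,
    ← sub_eq_add_neg, ← sub_mul, hprofile, add_mul, smul_mul_assoc, smul_mul_assoc]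

theorem hasDerivAt_ellipse (A B s : ℝ) :
    HasDerivAt (ellipse A B) (ellipseVelocity A B s) s := by
  have hcos : HasDerivAt (fun x => A * Real.cos x) (-(A * Real.sin s)) s := by
    simpa using (Real.hasDerivAt_cos s).const_mul A
  exact hcos.ofReal_comp.prodMk ((Real.hasDerivAt_sin s).const_mul B).ofReal_comp

theorem hasDerivAt_ellipseVelocity (A B s : ℝ) :
    HasDerivAt (ellipseVelocity A B) (-ellipse A B s) s := by
  have hsin : HasDerivAt (fun x => -(A * Real.sin x)) (-(A * Real.cos s)) s :=
    ((Real.hasDerivAt_sin s).const_mul A).neg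
  have hcos : HasDerivAt (fun x => B * Real.cos x) (-(B * Real.sin s)) s := by
    simpa using (Real.hasDerivAt_cos s).const_mul B
  exact (hsin.ofReal_comp.prodMk hcos.ofReal_comp).congr_deriv (by simp [ellipse])

theorem norm2_ellipseVelocity (A B s : ℝ) :
    norm2 (ellipseVelocity A B s) = A ^ 2 * Real.sin s ^ 2 + B ^ 2 * Real.cos s ^ 2 := by
  simp only [norm2, ellipseVelocity, Complex.norm_real, Real.norm_eq_abs, sq_abs]
  ring

theorem rinner2_ellipse_ellipseVelocity (A B s : ℝ) :
    rinner2 (ellipse A B s) (ellipseVelocity A B s) =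
      (B ^ 2 - A ^ 2) * (Real.cos s * Real.sin s) := by
  simp only [rinner2, rinner, ellipse, ellipseVelocity, Complex.ofReal_re, Complex.ofReal_im]
  ring

theorem ellipse_profile_equation {A B a b : ℝ} (hA : A ^ 2 = 1 + b ^ 2) (hB : B ^ 2 = 1 + a ^ 2)
    (s : ℝ) :
    -ellipse A B s - ((a : ℂ) ^ 2, (b : ℂ) ^ 2) * ellipse A B s =
      -norm2 (ellipseVelocity A B s) • ellipse A B s +
        rinner2 (ellipse A B s) (ellipseVelocity A B s) • ellipseVelocity A B s := by
  have hfst : -(A * Real.cos s) - a ^ 2 * (A * Real.cos s) =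
      -(A ^ 2 * Real.sin s ^ 2 + B ^ 2 * Real.cos s ^ 2) * (A * Real.cos s) +
        (B ^ 2 - A ^ 2) * (Real.cos s * Real.sin s) * -(A * Real.sin s) := by
    linear_combination A * Real.cos s * (hB + B ^ 2 * Real.sin_sq_add_cos_sq s)
  have hsnd : -(B * Real.sin s) - b ^ 2 * (B * Real.sin s) =
      -(A ^ 2 * Real.sin s ^ 2 + B ^ 2 * Real.cos s ^ 2) * (B * Real.sin s) +
        (B ^ 2 - A ^ 2) * (Real.cos s * Real.sin s) * (B * Real.cos s) := by
    linear_combination B * Real.sin s * (hA + A ^ 2 * Real.sin_sq_add_cos_sq s)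
  rw [norm2_ellipseVelocity, rinner2_ellipse_ellipseVelocity]
  ext1
  · simpa [ellipse, ellipseVelocity] using congrArg Complex.ofReal hfst
  · simpa [ellipse, ellipseVelocity] using congrArg Complex.ofReal hsnd

theorem selfShrinkerEquation_ellipse_mul_phase {A B a b : ℝ} (hA : A ^ 2 = 1 + b ^ 2)
    (hB : B ^ 2 = 1 + a ^ 2) :
    SelfShrinkerEquation fun s t => ellipse A B s * phase a b t :=
  selfShrinkerEquation_mul_phase (hasDerivAt_ellipse A B) (hasDerivAt_ellipseVelocity A B)
    (ellipse_profile_equation hA hB)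

theorem norm2_pd1_ellipse_mul_phase (A B a b s t : ℝ) :
    norm2 (pd1 (fun s t => ellipse A B s * phase a b t) s t) =
      A ^ 2 * Real.sin s ^ 2 + B ^ 2 * Real.cos s ^ 2 := by
  rw [pd1_mul (hasDerivAt_ellipse A B), norm2_mul_phase, norm2_ellipseVelocity]

theorem sq_sqrt_mul_one_div_sqrt {x y : ℝ} (hx : 0 ≤ x) (hy : 0 ≤ y) :
    (√x * (1 / √y)) ^ 2 = x / y := by
  rw [mul_one_div, div_pow, Real.sq_sqrt hx, Real.sq_sqrt hy]

theorem selfShrinkerEquation_realLeeWang {p q : ℝ} (hp : 0 < p) (hq : 0 < q) :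
    SelfShrinkerEquation (realLeeWang p q) := by
  apply selfShrinkerEquation_ellipse_mul_phase
  · rw [sq_sqrt_mul_one_div_sqrt (by positivity) hq.le, Real.sq_sqrt (by positivity)]
    field_simp
    ring
  · rw [sq_sqrt_mul_one_div_sqrt (by positivity) hp.le, Real.sq_sqrt (by positivity)]
    field_simp

theorem norm2_pd1_realLeeWang {p q : ℝ} (hp : 0 < p) (hq : 0 < q) (s t : ℝ) :
    norm2 (pd1 (realLeeWang p q) s t) =
      (p + q) / (p * q) * (p * Real.sin s ^ 2 + q * Real.cos s ^ 2) := by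
  refine (norm2_pd1_ellipse_mul_phase _ _ _ _ s t).trans ?_
  rw [sq_sqrt_mul_one_div_sqrt (by positivity) hq.le,
    sq_sqrt_mul_one_div_sqrt (by positivity) hp.le]
  field_simp

theorem lee_wang_self_shrinker_general {p q : ℝ} (hp : 0 < p) (hq : 0 < q) (s t : ℝ) :
    pd1 (pd1 (realLeeWang p q)) s t + pd2 (pd2 (realLeeWang p q)) s t
      = -((p + q) / (p * q) * (p * Real.sin s ^ 2 + q * Real.cos s ^ 2)) • realLeeWang p q s t
        + rinner2 (realLeeWang p q s t) (pd1 (realLeeWang p q) s t)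
          • pd1 (realLeeWang p q) s t := by
  rw [← norm2_pd1_realLeeWang hp hq s t]
  exact selfShrinkerEquation_realLeeWang hp hq s t

theorem leeWang_eq_realLeeWang (m n : ℕ) : leeWang m n = realLeeWang m n := rfl

/-- The Lee–Wang map satisfies the parametric self-shrinker equation
∂ₛ²Ψ + ∂ₜ²Ψ = -λ(s)Ψ + ⟨Ψ, ∂ₛΨ⟩∂ₛΨ, with conformal factor
λ(s) = ((m+n)/(mn))(m sin²s + n cos²s); hence H = -Ψ^⊥ and the Lee–Wang tori are
self-shrinkers. -/
theorem lee_wang_self_shrinker (m n : ℕ) (hm : 0 < m) (hmn : m ≤ n) :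
    ∀ s t : ℝ,
      pd1 (pd1 (leeWang m n)) s t + pd2 (pd2 (leeWang m n)) s t
        = -(((m + n : ℝ) / (m * n)) * (m * Real.sin s ^ 2 + n * Real.cos s ^ 2))
            • leeWang m n s t
          + (rinner2 (leeWang m n s t) (pd1 (leeWang m n) s t))
            • pd1 (leeWang m n) s t := by
  rw [leeWang_eq_realLeeWang]
  exact lee_wang_self_shrinker_general (Nat.cast_pos.2 hm) (Nat.cast_pos.2 (hm.trans_le hmn))
end
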